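/- Let χ̃ ∈ C_c^∞(ℝ) with support in [−1,1] and χ̃ = 1 on [−1/2,1/2], and set χ_ℓ(t) = χ̃(log t + ℓ) for ℓ ∈ ℕ. Consider ψ_ℓ(t) = χ_ℓ(t) t^{k+1/2} for fixed k ∈ ℤ. Then with respect to the weighted norm ‖f‖ := ‖t^{-(k+3/2)} f‖_{L²((0,∞); t dt)}, the norms ‖ψ_ℓ‖ are bounded above and below by positive constants independent of ℓ, while ‖t ψ_ℓ'(t) − (k+1/2) ψ_ℓ(t)‖ = ‖χ_ℓ'(log t)... ‖ → 0 is false in general but ‖(t∂_t − (k+1/2))ψ_ℓ‖ stays bounded and, after normalizing, ψ_ℓ/‖ψ_ℓ‖ is a Weyl sequence: ‖(t ∂_t − (k+1/2)) ψ_ℓ‖ / ‖ψ_ℓ‖ does not tend to 0 — instead the correct claim is: ‖ψ_ℓ‖ ≍ 1 and ‖(t∂_t − (k+1/2))ψ_ℓ‖ ≍ 1 but after replacing χ̃ by χ̃(·/L) with L → ∞ one gets ‖(t∂_t − (k+1/2))ψ_ℓ^{(L)}‖/‖ψ_ℓ^{(L)}‖ → 0. Formally: for every ε > 0 there exists a smooth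 compactly supported ψ on (0,∞) with ‖(t∂_t − (k+1/2))ψ‖ ≤ ε ‖ψ‖ in the t^{k+3/2} L²(t dt)-weighted norm. -/

import Mathlib

open MeasureTheory

/-!
In the variable `x = log t`, conjugation by `t ^ a` turns `t∂_t − a` into `d/dx`, and the space
`t ^ (a + 1) L²((0,∞); t dt)` into `L²(ℝ)`. Stretching a fixed `f` to `f (c x)` multiplies
`‖f'‖² / ‖f‖²` by `c²`, so the quotient can be made arbitrarily small.
-/

open Set Filter Topology

variable {E : Type*} [NormedAddCommGroup E] [NormedSpace ℝ E]

/-- The squared norm of `ψ` in the weighted space `t ^ μ L²((0,∞); t dt)`; as an integral of a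
real function it is `0` when `ψ` is not in that space. -/
noncomputable def weightedNormSq (μ : ℝ) (ψ : ℝ → E) : ℝ :=
  ∫ t in Ioi 0, ‖t ^ (-μ) • ψ t‖ ^ 2 * t

/-- The shifted Euler operator `t∂_t − a`. -/
noncomputable def shiftedEuler (a : ℝ) (ψ : ℝ → E) (t : ℝ) : E :=
  t • deriv ψ t - a • ψ t

/-- The function `t ↦ t ^ a f (log t)` on `(0,∞)`, by which functions on the logarithmic scale are
transplanted to the half-line. It is extended by zero, since `Real.log` is `log |t|` for `t < 0`. -/
noncomputable def rpowSMulCompLog (a : ℝ) (f : ℝ → E) : ℝ → E :=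
  (Ioi 0).indicator fun t => t ^ a • f (Real.log t)

theorem rpowSMulCompLog_of_pos (a : ℝ) (f : ℝ → E) {t : ℝ} (ht : 0 < t) :
    rpowSMulCompLog a f t = t ^ a • f (Real.log t) :=
  indicator_of_mem (mem_Ioi.2 ht) _

theorem rpowSMulCompLog_of_nonpos (a : ℝ) (f : ℝ → E) {t : ℝ} (ht : t ≤ 0) :
    rpowSMulCompLog a f t = 0 :=
  indicator_of_notMem (notMem_Ioi.2 ht) _

theorem rpowSMulCompLog_eventuallyEq (a : ℝ) (f : ℝ → E) {t : ℝ} (ht : 0 < t) :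
    rpowSMulCompLog a f =ᶠ[𝓝 t] fun s => s ^ a • f (Real.log s) :=
  eqOn_indicator.eventuallyEq_of_mem (Ioi_mem_nhds ht)

theorem tsupport_rpowSMulCompLog_subset (a : ℝ) {f : ℝ → E} (hf : HasCompactSupport f) :
    tsupport (rpowSMulCompLog a f) ⊆ Real.exp '' tsupport f := by
  refine closure_minimal (fun t ht => ?_) (hf.isCompact.image Real.continuous_exp).isClosed
  have hpos : 0 < t := lt_of_not_ge fun h => ht (rpowSMulCompLog_of_nonpos a f h)
  rw [Function.mem_support, rpowSMulCompLog_of_pos a f hpos] at ht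
  exact ⟨Real.log t, subset_tsupport f (right_ne_zero_of_smul ht), Real.exp_log hpos⟩

theorem tsupport_rpowSMulCompLog_subset_Ioi (a : ℝ) {f : ℝ → E} (hf : HasCompactSupport f) :
    tsupport (rpowSMulCompLog a f) ⊆ Ioi 0 :=
  Real.range_exp ▸ (tsupport_rpowSMulCompLog_subset a hf).trans (image_subset_range _ _)

theorem hasCompactSupport_rpowSMulCompLog (a : ℝ) {f : ℝ → E} (hf : HasCompactSupport f) :
    HasCompactSupport (rpowSMulCompLog a f) :=
  (hf.isCompact.image Real.continuous_exp).of_isClosed_subset (isClosed_tsupport _)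
    (tsupport_rpowSMulCompLog_subset a hf)

theorem contDiff_rpowSMulCompLog (a : ℝ) {f : ℝ → E} {n : WithTop ℕ∞} (hf : ContDiff ℝ n f)
    (hc : HasCompactSupport f) : ContDiff ℝ n (rpowSMulCompLog a f) := by
  refine contMDiff_iff_contDiff.1 (contMDiff_of_tsupport fun t ht => ?_)
  have hpos : 0 < t := tsupport_rpowSMulCompLog_subset_Ioi a hc ht
  refine (ContDiffAt.congr_of_eventuallyEq ?_
    (rpowSMulCompLog_eventuallyEq a f hpos)).contMDiffAt
  exact (Real.contDiffAt_rpow_const_of_ne hpos.ne').smul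
    (hf.contDiffAt.comp t (Real.contDiffAt_log.2 hpos.ne'))

theorem hasDerivAt_rpowSMulCompLog (a : ℝ) {f : ℝ → E} (hf : Differentiable ℝ f) {t : ℝ}
    (ht : 0 < t) :
    HasDerivAt (rpowSMulCompLog a f)
      (t ^ a • t⁻¹ • deriv f (Real.log t) + (a * t ^ (a - 1)) • f (Real.log t)) t :=
  ((Real.hasDerivAt_rpow_const (Or.inl ht.ne')).smul
    ((hf (Real.log t)).hasDerivAt.scomp t (Real.hasDerivAt_log ht.ne'))).congr_of_eventuallyEq
      (rpowSMulCompLog_eventuallyEq a f ht)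

theorem shiftedEuler_rpowSMulCompLog (a : ℝ) {f : ℝ → E} (hf : Differentiable ℝ f) {t : ℝ}
    (ht : 0 < t) :
    shiftedEuler a (rpowSMulCompLog a f) t = rpowSMulCompLog a (deriv f) t := by
  have hrpow : t * (a * t ^ (a - 1)) = a * t ^ a := by
    rw [Real.rpow_sub_one ht.ne']
    field_simp
  rw [shiftedEuler, (hasDerivAt_rpowSMulCompLog a hf ht).deriv, rpowSMulCompLog_of_pos a f ht,
    rpowSMulCompLog_of_pos a _ ht, smul_add, smul_smul t (a * _), hrpow, smul_comm t,
    smul_inv_smul₀ ht.ne', mul_smul, add_sub_cancel_right]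

theorem weightedNormSq_congr (μ : ℝ) {φ ψ : ℝ → E} (h : EqOn φ ψ (Ioi 0)) :
    weightedNormSq μ φ = weightedNormSq μ ψ :=
  setIntegral_congr_fun measurableSet_Ioi fun t ht => by simp only [h ht]

theorem integral_inv_smul_comp_log (g : ℝ → E) :
    ∫ t in Ioi 0, t⁻¹ • g (Real.log t) = ∫ x, g x := by
  rw [← Real.range_exp, ← image_univ,
    integral_image_eq_integral_abs_deriv_smul MeasurableSet.univ
      (fun x _ => (Real.hasDerivAt_exp x).hasDerivWithinAt) Real.exp_injective.injOn,
    setIntegral_univ]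
  simp only [Real.log_exp, Real.abs_exp, smul_inv_smul₀ (Real.exp_ne_zero _)]

theorem weightedNormSq_rpowSMulCompLog (a : ℝ) (f : ℝ → E) :
    weightedNormSq (a + 1) (rpowSMulCompLog a f) = ∫ x, ‖f x‖ ^ 2 := by
  rw [← integral_inv_smul_comp_log]
  refine setIntegral_congr_fun measurableSet_Ioi fun t (ht : 0 < t) => ?_
  have hrpow : t ^ (-(a + 1)) * t ^ a = t⁻¹ := by
    rw [← Real.rpow_add ht, neg_add_rev, neg_add_cancel_right, Real.rpow_neg_one]
  simp only [rpowSMulCompLog_of_pos a f ht, smul_smul, hrpow, norm_smul, norm_inv,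
    Real.norm_of_nonneg ht.le, smul_eq_mul]
  field_simp

theorem integral_norm_deriv_comp_mul_left_pow (f : ℝ → E) (c : ℝ) (n : ℕ) :
    ∫ x, ‖deriv (fun y => f (c * y)) x‖ ^ n = |c⁻¹| * (|c| ^ n * ∫ x, ‖deriv f x‖ ^ n) := by
  simp only [deriv_comp_mul_left, norm_smul, mul_pow, Real.norm_eq_abs]
  rw [integral_const_mul, Measure.integral_comp_mul_left fun y => ‖deriv f y‖ ^ n, smul_eq_mul,
    mul_left_comm]

theorem exists_pos_integral_norm_deriv_comp_mul_left_pow_le {f : ℝ → E} {n : ℕ} (hn : n ≠ 0)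
    (hf : 0 < ∫ x, ‖f x‖ ^ n) {δ : ℝ} (hδ : 0 < δ) :
    ∃ c > 0, ∫ x, ‖deriv (fun y => f (c * y)) x‖ ^ n ≤ δ * ∫ x, ‖f (c * x)‖ ^ n := by
  have hlim : Tendsto (fun c : ℝ => c ^ n * ∫ x, ‖deriv f x‖ ^ n) (𝓝[>] 0) (𝓝 0) := by
    have hcont : Continuous fun c : ℝ => c ^ n * ∫ x, ‖deriv f x‖ ^ n := by fun_prop
    simpa [hn] using (hcont.tendsto 0).mono_left nhdsWithin_le_nhds
  obtain ⟨c, hle, hc : 0 < c⟩ :=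
    ((hlim.eventually_le_const (mul_pos hδ hf)).and self_mem_nhdsWithin).exists
  refine ⟨c, hc, ?_⟩
  rw [integral_norm_deriv_comp_mul_left_pow, Measure.integral_comp_mul_left fun y => ‖f y‖ ^ n,
    smul_eq_mul, mul_left_comm δ, abs_inv, abs_of_pos hc]
  gcongr

theorem integral_norm_pow_pos {X : Type*} [TopologicalSpace X] [MeasurableSpace X]
    [OpensMeasurableSpace X] {ν : Measure X} [IsFiniteMeasureOnCompacts ν] [ν.IsOpenPosMeasure]
    {F : Type*} [NormedAddCommGroup F] {f : X → F} (hf : Continuous f) (hc : HasCompactSupport f)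
    {x : X} (hx : f x ≠ 0) {n : ℕ} (hn : n ≠ 0) : 0 < ∫ y, ‖f y‖ ^ n ∂ν :=
  (hf.norm.pow n).integral_pos_of_hasCompactSupport_nonneg_nonzero
    (hc.norm.comp_left (zero_pow hn)) (fun _ => pow_nonneg (norm_nonneg _) n)
    (pow_ne_zero n (norm_ne_zero_iff.2 hx))

theorem exists_contDiff_integral_norm_deriv_pow_le [Nontrivial E] {n : ℕ} (hn : n ≠ 0) {δ : ℝ}
    (hδ : 0 < δ) :
    ∃ f : ℝ → E, ContDiff ℝ (⊤ : ℕ∞) f ∧ HasCompactSupport f ∧ 0 < ∫ x, ‖f x‖ ^ n ∧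
      ∫ x, ‖deriv f x‖ ^ n ≤ δ * ∫ x, ‖f x‖ ^ n := by
  obtain ⟨v, hv⟩ := exists_ne (0 : E)
  let χ : ContDiffBump (0 : ℝ) := ⟨1, 2, one_pos, one_lt_two⟩
  let g : ℝ → E := fun x => χ x • v
  have hg : ContDiff ℝ (⊤ : ℕ∞) g := χ.contDiff.smul contDiff_const
  have hgc : HasCompactSupport g := χ.hasCompactSupport.smul_right
  have hg0 : g 0 ≠ 0 :=
    smul_ne_zero (χ.pos_of_mem_ball (Metric.mem_ball_self χ.rOut_pos)).ne' hv
  obtain ⟨c, hc, hle⟩ := exists_pos_integral_norm_deriv_comp_mul_left_pow_le hn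
    (integral_norm_pow_pos hg.continuous hgc hg0 hn) hδ
  have hf : ContDiff ℝ (⊤ : ℕ∞) fun x => g (c * x) := hg.comp (contDiff_const.mul contDiff_id)
  have hfc : HasCompactSupport fun x => g (c * x) :=
    hgc.comp_homeomorph (Homeomorph.mulLeft₀ c hc.ne')
  exact ⟨_, hf, hfc,
    integral_norm_pow_pos hf.continuous hfc (x := 0) (by rwa [mul_zero]) hn, hle⟩

theorem statement_18_general [Nontrivial E] (a : ℝ) {ε : ℝ} (hε : 0 < ε) :
    ∃ ψ : ℝ → E, ContDiff ℝ (⊤ : ℕ∞) ψ ∧ HasCompactSupport ψ ∧ tsupport ψ ⊆ Ioi 0 ∧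
      0 < weightedNormSq (a + 1) ψ ∧
      weightedNormSq (a + 1) (shiftedEuler a ψ) ≤ ε ^ 2 * weightedNormSq (a + 1) ψ := by
  obtain ⟨f, hf, hc, hpos, hle⟩ :=
    exists_contDiff_integral_norm_deriv_pow_le (E := E) two_ne_zero (pow_pos hε 2)
  have hEuler : EqOn (shiftedEuler a (rpowSMulCompLog a f)) (rpowSMulCompLog a (deriv f)) (Ioi 0) :=
    fun _ ht => shiftedEuler_rpowSMulCompLog a (hf.differentiable (by simp)) ht
  refine ⟨rpowSMulCompLog a f, contDiff_rpowSMulCompLog a hf hc,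
    hasCompactSupport_rpowSMulCompLog a hc, tsupport_rpowSMulCompLog_subset_Ioi a hc, ?_, ?_⟩
  · rwa [weightedNormSq_rpowSMulCompLog]
  · rwa [weightedNormSq_congr _ hEuler, weightedNormSq_rpowSMulCompLog,
      weightedNormSq_rpowSMulCompLog]

/-- Weyl-sequence statement at the indicial weight `μ_k = k + 3/2`: for every `ε > 0`
there is a smooth, compactly supported `ψ` on `(0,∞)`, nonzero in the weighted space
`t^{k+3/2} L²((0,∞); t dt)`, with `‖(t∂_t − (k+1/2))ψ‖ ≤ ε ‖ψ‖` in that weighted norm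
(stated with squared norms).  Hence `t∂_t − (k+1/2)` does not have closed range there. -/
theorem statement_18 (k : ℤ) :
    ∀ ε : ℝ, 0 < ε → ∃ ψ : ℝ → ℝ,
      ContDiff ℝ (⊤ : ℕ∞) ψ ∧ HasCompactSupport ψ ∧ tsupport ψ ⊆ Set.Ioi 0 ∧
      0 < (∫ t in Set.Ioi (0 : ℝ), (t ^ (-((k : ℝ) + 3/2)) * ψ t) ^ 2 * t) ∧
      (∫ t in Set.Ioi (0 : ℝ),
          (t ^ (-((k : ℝ) + 3/2)) * (t * deriv ψ t - ((k : ℝ) + 1/2) * ψ t)) ^ 2 * t)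
        ≤ ε ^ 2 * ∫ t in Set.Ioi (0 : ℝ), (t ^ (-((k : ℝ) + 3/2)) * ψ t) ^ 2 * t := by
  simpa only [weightedNormSq, shiftedEuler, smul_eq_mul, Real.norm_eq_abs, sq_abs,
    show (k : ℝ) + 1 / 2 + 1 = k + 3 / 2 by ring] using
    fun ε => statement_18_general (E := ℝ) (k + 1 / 2) (ε := ε)
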